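/- arXiv:2510.10901 — 10 statements merged into one kernel-verified Lean document; each statement's English description precedes it below -/
import Mathlib

section
/- Let S be a finite set of positive integers. For every positive integer n, the integer α_S(n) is odd if and only if n ∈ S. -/
/-- The key coefficient function `α_S : ℕ → ℤ` (supported on positive integers),
packaged as a finitely supported function:
`α_S(n) = ∑_{I ⊆ S, I ≠ ∅} (−1)^{|I|} 2^{|I|−1} [n = gcd(I)]`. -/
noncomputable def alphaF (S : Finset ℕ) : ℕ →₀ ℤ :=
  ∑ I ∈ S.powerset.filter (· ≠ ∅),
    Finsupp.single (I.gcd id) ((-1 : ℤ) ^ I.card * 2 ^ (I.card - 1))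

/-- For every positive integer `n`, the integer `α_S(n)` is odd iff `n ∈ S`. -/
theorem alpha_odd_iff_mem (S : Finset ℕ) (hS : ∀ s ∈ S, 0 < s)
    (n : ℕ) (hn : 0 < n) : Odd (alphaF S n) ↔ n ∈ S := by
  have key : ∀ I ∈ S.powerset.filter (· ≠ ∅),
      (Odd ((Finsupp.single (I.gcd id) ((-1 : ℤ) ^ I.card * 2 ^ (I.card - 1))) n) ↔ I = {n}) := by
    intro I hI
    have hne : I ≠ ∅ := (Finset.mem_filter.1 hI).2
    have hpos : 0 < I.card := Finset.card_pos.2 (Finset.nonempty_iff_ne_empty.2 hne)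
    constructor
    · intro h
      rw [Finsupp.single_apply] at h
      split_ifs at h with hg
      · have h2 : Odd ((2 : ℤ) ^ (I.card - 1)) := (Int.odd_mul.1 h).2
        have h3 : I.card - 1 = 0 := by
          by_contra hc
          exact (Int.not_odd_iff_even.2 ((even_two : Even (2 : ℤ)).pow_of_ne_zero hc)) h2
        obtain ⟨a, rfl⟩ := Finset.card_eq_one.1 (by omega : I.card = 1)
        have : a = n := by simpa using hg
        rw [this]
      · simp at h
    · rintro rfl
      simp
  unfold alphaF
  rw [Finsupp.finsetSum_apply]
  by_cases h : n ∈ S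
  · have hmem : ({n} : Finset ℕ) ∈ S.powerset.filter (· ≠ ∅) := by simp [h]
    rw [← Finset.add_sum_erase _ _ hmem]
    refine iff_of_true (Odd.add_even ((key _ hmem).2 rfl) (Finset.even_sum _ ?_)) h
    intro I hI
    rw [Finset.mem_erase] at hI
    exact Int.not_odd_iff_even.1 (fun ho => hI.1 ((key I hI.2).1 ho))
  · refine iff_of_false (Int.not_odd_iff_even.2 (Finset.even_sum _ ?_)) h
    intro I hI
    refine Int.not_odd_iff_even.1 (fun ho => ?_)
    obtain rfl := (key I hI).1 ho
    simp [h] at hI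
end

section
/- (Decryption correctness / key involution) Let S be a finite set of positive integers. For every finitely supported p : ℕ+ → ℤ, T_S(T_S p) = p; that is, the key operator T_S is an involution. -/
/-- The key operator `T_S` on finitely supported `p : ℕ →₀ ℤ`
(`p` represents the dihedral plaintext `∑_i p(i)(D_i)`):
`(T_S p)(j) = p(j) + 2 ∑_{i ∈ supp p} ∑_{n ∈ supp α_S} p(i) α_S(n) [gcd(i,n) = j]`. -/
noncomputable def keyOp (S : Finset ℕ) (p : ℕ →₀ ℤ) : ℕ →₀ ℤ :=
  p + 2 • ∑ i ∈ p.support, ∑ n ∈ (alphaF S).support,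
    Finsupp.single (Nat.gcd i n) (p i * alphaF S n)

/-- The mark homomorphism `p ↦ ∑_{m ∣ i} p(i)`. -/
noncomputable def markHom (m : ℕ) : (ℕ →₀ ℤ) →+ ℤ :=
  Finsupp.liftAddHom (fun i => if m ∣ i then AddMonoidHom.id ℤ else 0)

lemma markHom_single (m i : ℕ) (c : ℤ) :
    markHom m (Finsupp.single i c) = if m ∣ i then c else 0 := by
  unfold markHom
  rw [Finsupp.liftAddHom_apply_single]
  split_ifs <;> simp

lemma markHom_apply (m : ℕ) (p : ℕ →₀ ℤ) :
    markHom m p = ∑ i ∈ p.support, if m ∣ i then p i else 0 := by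
  conv_lhs => rw [← Finsupp.sum_single p, Finsupp.sum, map_sum]
  simp only [markHom_single]

lemma markHom_keyOp (S : Finset ℕ) (p : ℕ →₀ ℤ) (m : ℕ) :
    markHom m (keyOp S p) = markHom m p * (1 + 2 * markHom m (alphaF S)) := by
  have h : markHom m p * markHom m (alphaF S) =
      ∑ i ∈ p.support, ∑ n ∈ (alphaF S).support,
        if m ∣ Nat.gcd i n then p i * alphaF S n else 0 := by
    rw [markHom_apply, markHom_apply, Finset.sum_mul_sum]
    refine Finset.sum_congr rfl fun i _ => Finset.sum_congr rfl fun n _ => ?_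
    by_cases h1 : m ∣ i <;> by_cases h2 : m ∣ n <;> simp [Nat.dvd_gcd_iff, h1, h2]
  unfold keyOp
  simp only [map_add, map_nsmul, map_sum, markHom_single]
  rw [← h]
  simp only [nsmul_eq_mul]
  push_cast
  ring

lemma markHom_alphaF (S : Finset ℕ) (m : ℕ) :
    1 + 2 * markHom m (alphaF S) = (-1) ^ (S.filter (m ∣ ·)).card := by
  have h1 : ∑ I ∈ S.powerset, (if m ∣ I.gcd id then (-2 : ℤ) ^ I.card else 0) =
      (-1) ^ (S.filter (m ∣ ·)).card := by
    have h := Finset.sum_pow_mul_eq_add_pow (-2 : ℤ) 1 (S.filter (m ∣ ·))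
    norm_num at h
    rw [← h, ← Finset.sum_filter]
    refine Finset.sum_congr ?_ fun _ _ => rfl
    ext I
    simp only [Finset.mem_filter, Finset.mem_powerset, Finset.dvd_gcd_iff, id,
      Finset.subset_iff]
    constructor
    · rintro ⟨a, b⟩ x hx
      exact ⟨a hx, b x hx⟩
    · intro a
      exact ⟨fun x hx => (a hx).1, fun x hx => (a hx).2⟩
  rw [← h1, ← Finset.add_sum_erase _ _ (Finset.empty_mem_powerset S)]
  unfold alphaF
  rw [map_sum, Finset.mul_sum, Finset.filter_ne']
  simp only [markHom_single]
  congr 1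
  · refine Finset.sum_congr rfl fun I hI => ?_
    split_ifs
    · have hc : I.card ≠ 0 := by
        simpa using (Finset.mem_erase.1 hI).1
      obtain ⟨k, hk⟩ := Nat.exists_eq_succ_of_ne_zero hc
      rw [hk, show (-2 : ℤ) = (-1) * 2 by norm_num, mul_pow]
      simp only [Nat.succ_eq_add_one, Nat.add_sub_cancel, pow_succ]
      ring
    · simp

lemma eq_of_markHom {p q : ℕ →₀ ℤ} (h : ∀ m, markHom m p = markHom m q) : p = q := by
  rw [← sub_eq_zero]
  set r := p - q with hr
  have h0 : ∀ m, markHom m r = 0 := fun m => by rw [hr, map_sub, h m, sub_self]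
  by_contra hne
  have hs : r.support.Nonempty := Finsupp.support_nonempty_iff.2 hne
  have hz : r 0 = 0 := by
    have := h0 0
    rw [markHom_apply] at this
    simpa [zero_dvd_iff] using this
  have hM := r.support.max'_mem hs
  set M := r.support.max' hs with hMdef
  have := h0 M
  rw [markHom_apply, Finset.sum_eq_single M] at this
  · simp at this
    simp [this] at hM
  · intro b hb hbM
    rw [if_neg]
    intro hd
    have hb0 : b ≠ 0 := by
      rintro rfl
      simp [hz] at hb
    have := Nat.le_of_dvd (Nat.pos_of_ne_zero hb0) hd
    have := r.support.le_max' b hb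
    omega
  · intro hh
    exact absurd hM hh

/-- (Decryption correctness / key involution) The key operator `T_S` is an
involution on finitely supported plaintexts. -/
theorem key_involution (S : Finset ℕ) (hS : ∀ s ∈ S, 0 < s)
    (p : ℕ →₀ ℤ) (hp : ∀ i ∈ p.support, 0 < i) :
    keyOp S (keyOp S p) = p := by
  refine eq_of_markHom fun m => ?_
  rw [markHom_keyOp, markHom_keyOp, mul_assoc, markHom_alphaF, ← mul_pow]
  simp
end

section
/- Let S be a finite set of positive integers. For every positive integer n, α_S(n) + ∑_{(a,b) ∈ supp(α_S) × supp(α_S), gcd(a,b) = n} α_S(a) α_S(b) = 0. (This identity is equivalent to the statement that the key element k_S = (O(2)) + ∑_n α_S(n)(D_n) squares to the identity (O(2)) in the Burnside ring A(O(2)).) -/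
/-- The naturals as a commutative monoid under gcd, with unit `0`. -/
def GcdNat : Type := ℕ

instance : DecidableEq GcdNat := inferInstanceAs (DecidableEq ℕ)

instance : CommMonoid GcdNat where
  mul a b := Nat.gcd a b
  one := (0 : ℕ)
  mul_assoc a b c := Nat.gcd_assoc a b c
  one_mul a := Nat.gcd_zero_left a
  mul_one a := Nat.gcd_zero_right a
  mul_comm a b := Nat.gcd_comm a b

/-- The inclusion of the naturals. -/
def toG (n : ℕ) : GcdNat := n

theorem toG_mul (a b : ℕ) : toG a * toG b = toG (Nat.gcd a b) := rfl

theorem toG_zero : (1 : GcdNat) = toG 0 := rfl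

theorem prod_single_gcd (I : Finset ℕ) :
    ∏ s ∈ I, (MonoidAlgebra.single (toG s) (-2 : ℤ))
      = MonoidAlgebra.single (toG (I.gcd id)) ((-2 : ℤ) ^ I.card) := by
  classical
  induction I using Finset.induction_on with
  | empty => simp [← toG_zero, MonoidAlgebra.one_def]
  | insert a I ha ih =>
    rw [Finset.prod_insert ha, ih, MonoidAlgebra.single_mul_single, toG_mul,
      Finset.gcd_insert, Finset.card_insert_of_notMem ha, pow_succ']
    rfl

/-- `alphaF` as an element of the monoid algebra. -/
noncomputable def alphaM (S : Finset ℕ) : MonoidAlgebra ℤ GcdNat :=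
  ∑ I ∈ S.powerset.filter (· ≠ ∅),
    MonoidAlgebra.single (toG (I.gcd id)) ((-1 : ℤ) ^ I.card * 2 ^ (I.card - 1))

theorem alphaM_coeff (S : Finset ℕ) : (alphaM S).coeff = alphaF S := by
  unfold alphaM
  rw [MonoidAlgebra.coeff_sum]
  rfl

theorem key_prod (S : Finset ℕ) :
    ∏ s ∈ S, (1 + MonoidAlgebra.single (toG s) (-2 : ℤ)) = 1 + (2 : ℤ) • alphaM S := by
  classical
  rw [Finset.prod_one_add, ← Finset.sum_filter_add_sum_filter_not _ (fun I => I ≠ ∅), add_comm]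
  congr 1
  · have : S.powerset.filter (fun I => ¬ I ≠ ∅) = {∅} := by
      ext I; simp +contextual
    rw [this]; simp
  · unfold alphaM
    rw [Finset.smul_sum]
    refine Finset.sum_congr rfl fun I hI => ?_
    have hI : I.card ≠ 0 := by simpa using (Finset.mem_filter.1 hI).2
    rw [prod_single_gcd, MonoidAlgebra.smul_single]
    congr 1
    obtain ⟨k, hk⟩ := Nat.exists_eq_succ_of_ne_zero hI
    rw [hk, show (-2 : ℤ) = (-1) * 2 by norm_num, mul_pow]
    simp [pow_succ]; ring

theorem key_sq (S : Finset ℕ) :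
    (1 + (2 : ℤ) • alphaM S) * (1 + (2 : ℤ) • alphaM S) = 1 := by
  rw [← key_prod, ← Finset.prod_mul_distrib]
  refine Finset.prod_eq_one fun s _ => ?_
  have h1 : MonoidAlgebra.single (toG s) (-2 : ℤ) * MonoidAlgebra.single (toG s) (-2 : ℤ)
      = (-2 : ℤ) • MonoidAlgebra.single (toG s) (-2 : ℤ) := by
    rw [MonoidAlgebra.single_mul_single, toG_mul, Nat.gcd_self, MonoidAlgebra.smul_single]
    rfl
  simp only [add_mul, mul_add, h1, one_mul, mul_one]
  module

theorem alphaM_add_sq (S : Finset ℕ) (m : GcdNat) :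
    (alphaM S).coeff m + (alphaM S * alphaM S).coeff m = 0 := by
  have h := key_sq S
  have h2 : (4 : ℤ) • (alphaM S + alphaM S * alphaM S) = 0 := by
    simp only [zsmul_eq_mul] at h ⊢
    push_cast at h ⊢
    linear_combination h
  have h3 := congrArg (fun x => x.coeff m) h2
  simp only [MonoidAlgebra.coeff_smul, MonoidAlgebra.coeff_add, MonoidAlgebra.coeff_zero,
    Finsupp.smul_apply, Finsupp.add_apply, Finsupp.zero_apply, smul_eq_mul] at h3
  omega

/-- `α_S(n) + ∑_{(a,b) ∈ supp(α_S) × supp(α_S), gcd(a,b) = n} α_S(a) α_S(b) = 0`;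
equivalently, the key element `k_S` squares to the identity `(O(2))` in `A(O(2))`. -/
theorem key_squares_to_identity (S : Finset ℕ) (hS : ∀ s ∈ S, 0 < s)
    (n : ℕ) (hn : 0 < n) :
    alphaF S n
      + ∑ ab ∈ ((alphaF S).support ×ˢ (alphaF S).support).filter
          (fun ab => Nat.gcd ab.1 ab.2 = n),
          alphaF S ab.1 * alphaF S ab.2 = 0 := by
  have h := alphaM_add_sq S (toG n)
  rw [MonoidAlgebra.coeff_mul, alphaM_coeff] at h
  rw [Finset.sum_filter, Finset.sum_product]
  exact h
end

section
/- For every positive integer m and every finitely supported p : ℕ+ → ℤ, T^{(m)}(T^{(m)} p) = p; that is, each basic-degree operator is an involution. -/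
/-- The basic-degree operator `T^{(m)}`:
`(T^{(m)} p)(j) = p(j) − 2 ∑_{i ∈ supp p} p(i) [gcd(i,m) = j]`. -/
noncomputable def basicOp (m : ℕ) (p : ℕ →₀ ℤ) : ℕ →₀ ℤ :=
  p - 2 • ∑ i ∈ p.support, Finsupp.single (Nat.gcd i m) (p i)

theorem basicOp_eq_mapDomain (m : ℕ) (p : ℕ →₀ ℤ) :
    basicOp m p = p - 2 • Finsupp.mapDomain (fun i => Nat.gcd i m) p := rfl

/-- Each basic-degree operator `T^{(m)}` is an involution. -/
theorem basic_degree_involution (m : ℕ) (hm : 0 < m)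
    (p : ℕ →₀ ℤ) (hp : ∀ i ∈ p.support, 0 < i) :
    basicOp m (basicOp m p) = p := by
  have idem : Finsupp.mapDomain (fun i => Nat.gcd i m)
      (Finsupp.mapDomain (fun i => Nat.gcd i m) p)
      = Finsupp.mapDomain (fun i => Nat.gcd i m) p := by
    rw [← Finsupp.mapDomain_comp]
    congr 1
    funext i
    simp
  have key : Finsupp.mapDomain (fun i => Nat.gcd i m)
      (p - 2 • Finsupp.mapDomain (fun i => Nat.gcd i m) p)
      = - Finsupp.mapDomain (fun i => Nat.gcd i m) p := by
    have h := map_sub (Finsupp.mapDomain.addMonoidHom (M := ℤ) (fun i => Nat.gcd i m)) p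
      (2 • Finsupp.mapDomain (fun i => Nat.gcd i m) p)
    rw [map_nsmul] at h
    simp only [Finsupp.mapDomain.addMonoidHom_apply] at h
    rw [h, idem]
    abel
  rw [basicOp_eq_mapDomain m (basicOp m p), basicOp_eq_mapDomain, key]
  abel
end

section
/- Let S be a finite set of positive integers and q a positive integer. Then for every positive integer n, α_{qS}(qn) = α_S(n), and α_{qS}(m) = 0 for every positive integer m not divisible by q, where qS = {q·s : s ∈ S}. -/
theorem alphaF_image_apply (S : Finset ℕ) (q : ℕ) (hq : 0 < q) (m : ℕ) :
    alphaF (S.image (fun s => q * s)) m =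
      ∑ I ∈ S.powerset.filter (· ≠ ∅),
        Finsupp.single (q * I.gcd id) ((-1 : ℤ) ^ I.card * 2 ^ (I.card - 1)) m := by
  have hinj : Function.Injective (fun s : ℕ => q * s) :=
    fun a b h => Nat.eq_of_mul_eq_mul_left hq h
  unfold alphaF
  rw [Finsupp.finset_sum_apply]
  symm
  refine Finset.sum_bij (fun I _ => I.image (fun s => q * s)) ?_ ?_ ?_ ?_
  · intro I hI
    simp only [Finset.mem_filter, Finset.mem_powerset, ne_eq, Finset.image_eq_empty] at hI ⊢
    exact ⟨Finset.image_subset_image hI.1, hI.2⟩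
  · intro I _ J _ h
    exact Finset.image_injective hinj h
  · intro J hJ
    simp only [Finset.mem_filter, Finset.mem_powerset, ne_eq] at hJ
    obtain ⟨I, hI, rfl⟩ := Finset.subset_image_iff.1 hJ.1
    refine ⟨I, ?_, rfl⟩
    simp only [Finset.mem_filter, Finset.mem_powerset, ne_eq]
    refine ⟨by exact_mod_cast hI, ?_⟩
    rintro rfl
    exact hJ.2 (by simp)
  · intro I _
    have hg : (I.image (fun s => q * s)).gcd id = q * I.gcd id := by
      rw [Finset.gcd_image]
      have := Finset.gcd_mul_left (s := I) (f := (id : ℕ → ℕ)) (a := q)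
      simpa [Function.comp_def] using this
    rw [hg, Finset.card_image_of_injective _ hinj]

/-- For `qS = {q·s : s ∈ S}`: `α_{qS}(qn) = α_S(n)` for every positive `n`, and
`α_{qS}(m) = 0` for every positive `m` not divisible by `q`. -/
theorem alpha_scaling (S : Finset ℕ) (hS : ∀ s ∈ S, 0 < s) (q : ℕ) (hq : 0 < q) :
    (∀ n : ℕ, 0 < n → alphaF (S.image (fun s => q * s)) (q * n) = alphaF S n) ∧
    (∀ m : ℕ, 0 < m → ¬ q ∣ m → alphaF (S.image (fun s => q * s)) m = 0) := by
  constructor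
  · intro n _
    rw [alphaF_image_apply S q hq, alphaF, Finsupp.finset_sum_apply]
    refine Finset.sum_congr rfl fun I _ => ?_
    simp [Finsupp.single_apply, hq.ne']
  · intro m _ hm
    rw [alphaF_image_apply S q hq]
    refine Finset.sum_eq_zero fun I _ => ?_
    rw [Finsupp.single_apply, if_neg]
    rintro rfl
    exact hm (dvd_mul_right _ _)
end

section
/- (Key Ambiguity on W_L) Let S be a finite set of positive integers, L a positive integer, and q a prime with q > L. Let S' = {q·s : s ∈ S}. Then for every finitely supported p : ℕ+ → ℤ with supp(p) ⊆ {1, …, L}, one has T_{S'} p = T_S p; that is, the key elements k_S and k_{S'} induce identical linear transformations on the submodule W_L = ℤ[{(D_1), …, (D_L)}]. -/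
lemma alphaF_image (S : Finset ℕ) (q : ℕ) (hq : 0 < q) :
    alphaF (S.image (fun s => q * s)) = Finsupp.mapDomain (fun n => q * n) (alphaF S) := by
  have hinj : Function.Injective (fun s : ℕ => q * s) :=
    fun a b h => Nat.eq_of_mul_eq_mul_left hq h
  unfold alphaF
  rw [Finsupp.mapDomain_finsetSum]
  symm
  apply Finset.sum_nbij (fun I => I.image (fun s => q * s))
  · intro I hI
    simp only [Finset.mem_filter, Finset.mem_powerset] at hI ⊢
    exact ⟨Finset.image_subset_image hI.1, by simpa using hI.2⟩
  · exact (Finset.image_injective hinj).injOn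
  · intro J hJ
    simp only [Finset.coe_filter, Finset.mem_powerset, Set.mem_ofPred_eq] at hJ
    obtain ⟨I, hI, rfl⟩ := Finset.subset_image_iff.1 hJ.1
    refine ⟨I, ?_, rfl⟩
    simp only [Finset.coe_filter, Finset.mem_powerset, Set.mem_ofPred_eq]
    refine ⟨by exact_mod_cast hI, ?_⟩
    rintro rfl
    exact hJ.2 (by simp)
  · intro I hI
    rw [Finsupp.mapDomain_single, Finset.card_image_of_injective _ hinj, Finset.gcd_image]
    congr 1
    have := Finset.gcd_mul_left (s := I) (f := (id : ℕ → ℕ)) (a := q)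
    simp only [normalize_eq] at this
    rw [← this]
    rfl

/-- (Key Ambiguity on `W_L`) If `q` is a prime with `q > L` and
`S' = {q·s : s ∈ S}`, then `T_{S'}` and `T_S` agree on every plaintext
supported in `{1, …, L}`: the keys `k_S` and `k_{S'}` induce identical linear
transformations on `W_L = ℤ[{(D_1), …, (D_L)}]`. -/
theorem key_ambiguity (S : Finset ℕ) (hS : ∀ s ∈ S, 0 < s)
    (L : ℕ) (hL : 0 < L) (q : ℕ) (hq : q.Prime) (hqL : L < q)
    (p : ℕ →₀ ℤ) (hp : p.support ⊆ Finset.Icc 1 L) :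
    keyOp (S.image (fun s => q * s)) p = keyOp S p := by
  unfold keyOp
  congr 2
  apply Finset.sum_congr rfl
  intro i hi
  have hi' := Finset.mem_Icc.1 (hp hi)
  have hc : Nat.Coprime i q :=
    ((Nat.Prime.coprime_iff_not_dvd hq).2
      (Nat.not_dvd_of_pos_of_lt hi'.1 (lt_of_le_of_lt hi'.2 hqL))).symm
  change (alphaF (S.image (fun s => q * s))).sum
      (fun n a => Finsupp.single (Nat.gcd i n) (p i * a))
    = (alphaF S).sum (fun n a => Finsupp.single (Nat.gcd i n) (p i * a))
  rw [alphaF_image S q hq.pos, Finsupp.sum_mapDomain_index]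
  · have h : ∀ n, Nat.gcd i (q * n) = Nat.gcd i n := fun n =>
      Nat.Coprime.gcd_mul_left_cancel_right n hc.symm
    simp only [h]
  · intro b; simp
  · intro b m₁ m₂; rw [mul_add, Finsupp.single_add]
end

section
/- (Infinite Non-Identifiability from Finite Data) Let S be a nonempty finite set of positive integers and L a positive integer. Then the collection of finite sets S' of positive integers satisfying T_{S'} p = T_S p for all finitely supported p : ℕ+ → ℤ with supp(p) ⊆ {1, …, L} is infinite; in particular, there exist infinitely many distinct key sets inducing the same linear transformation as k_S on W_L = ℤ[{(D_1), …, (D_L)}]. -/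
theorem keyOp_formula (S : Finset ℕ) (p : ℕ →₀ ℤ) :
    keyOp S p = p + 2 • ∑ i ∈ p.support, ∑ I ∈ S.powerset.filter (· ≠ ∅),
      Finsupp.single (Nat.gcd i (I.gcd id)) (p i * ((-1 : ℤ) ^ I.card * 2 ^ (I.card - 1))) := by
  unfold keyOp
  congr 2
  refine Finset.sum_congr rfl fun i _ => ?_
  change (alphaF S).sum (fun n a => Finsupp.single (Nat.gcd i n) (p i * a)) = _
  unfold alphaF
  rw [← Finsupp.sum_finset_sum_index]
  · refine Finset.sum_congr rfl fun I _ => ?_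
    rw [Finsupp.sum_single_index]
    simp
  · intro a
    simp
  · intro a b c
    rw [mul_add, Finsupp.single_add]

theorem gcd_shift (i M : ℕ) (h : i ∣ M) (I : Finset ℕ) (hI : I ≠ ∅) :
    Nat.gcd i ((I.map (addRightEmbedding M)).gcd id) = Nat.gcd i (I.gcd id) := by
  have key : ∀ d, d ∣ i → (d ∣ (I.map (addRightEmbedding M)).gcd id ↔ d ∣ I.gcd id) := by
    intro d hd
    have hM : d ∣ M := hd.trans h
    simp [Finset.dvd_gcd_iff, Nat.dvd_add_left hM]
  apply Nat.dvd_antisymm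
  · exact Nat.dvd_gcd (Nat.gcd_dvd_left _ _)
      ((key _ (Nat.gcd_dvd_left _ _)).1 (Nat.gcd_dvd_right _ _))
  · exact Nat.dvd_gcd (Nat.gcd_dvd_left _ _)
      ((key _ (Nat.gcd_dvd_left _ _)).2 (Nat.gcd_dvd_right _ _))

/-- (Infinite Non-Identifiability from Finite Data) The collection of finite
sets `S'` of positive integers whose key operator agrees with that of `S` on
all plaintexts supported in `{1, …, L}` is infinite. -/
theorem infinite_non_identifiability (S : Finset ℕ) (hS : ∀ s ∈ S, 0 < s)
    (hSne : S.Nonempty) (L : ℕ) (hL : 0 < L) :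
    {S' : Finset ℕ | (∀ s ∈ S', 0 < s) ∧
      ∀ p : ℕ →₀ ℤ, p.support ⊆ Finset.Icc 1 L → keyOp S' p = keyOp S p}.Infinite := by
  refine Set.infinite_of_injective_forall_mem
    (f := fun k : ℕ => S.map (addRightEmbedding (k * L.factorial))) ?_ ?_
  · intro a b hab
    have h := congrArg (fun T : Finset ℕ => ∑ x ∈ T, x) hab
    simp only [Finset.sum_map, addRightEmbedding_apply, Finset.sum_add_distrib,
      Finset.sum_const, smul_eq_mul] at h
    have h2 := Nat.eq_of_mul_eq_mul_left hSne.card_pos (Nat.add_left_cancel h)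
    exact Nat.eq_of_mul_eq_mul_right L.factorial_pos h2
  · intro k
    refine ⟨?_, ?_⟩
    · intro s hs
      obtain ⟨t, ht, rfl⟩ := Finset.mem_map.1 hs
      have := hS t ht
      simp only [addRightEmbedding_apply]
      omega
    · intro p hp
      rw [keyOp_formula, keyOp_formula]
      congr 2
      refine Finset.sum_congr rfl fun i hi => ?_
      have hi' := Finset.mem_Icc.1 (hp hi)
      have hd : i ∣ k * L.factorial := (Nat.dvd_factorial hi'.1 hi'.2).mul_left k
      symm
      refine Finset.sum_bij (fun I _ => I.map (addRightEmbedding (k * L.factorial))) ?_ ?_ ?_ ?_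
      · intro I hI
        simpa using hI
      · intro I _ J _ h
        exact Finset.map_injective _ h
      · intro J hJ
        simp only [Finset.mem_filter, Finset.mem_powerset] at hJ
        obtain ⟨I, hI, rfl⟩ := Finset.subset_map_iff.1 hJ.1
        refine ⟨I, ?_, rfl⟩
        simpa [hI] using hJ.2
      · intro I hI
        rw [gcd_shift i _ hd I (Finset.mem_filter.1 hI).2, Finset.card_map]
end

section
/- Let S₀ and S₁ be finite sets of positive integers with S₀ ≠ S₁, and let x* be the largest element of the symmetric difference S₀ △ S₁. Then β_{S₀}(x*) − β_{S₁}(x*) is odd; in particular β_{S₀}(x*) ≠ β_{S₁}(x*). -/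
/-- `β_S(x) = ∑_{n ∈ supp α_S, x ∣ n} α_S(n)`. -/
noncomputable def beta (S : Finset ℕ) (x : ℕ) : ℤ :=
  ∑ n ∈ (alphaF S).support.filter (x ∣ ·), alphaF S n

lemma beta_eq (S : Finset ℕ) (x : ℕ) :
    beta S x = ∑ I ∈ (S.filter (x ∣ ·)).powerset.filter (· ≠ ∅),
      ((-1 : ℤ) ^ I.card * 2 ^ (I.card - 1)) := by
  have h1 : beta S x = (alphaF S).sum (fun n a => if x ∣ n then a else 0) := by
    rw [beta, Finset.sum_filter]; rfl
  rw [h1, alphaF, ← Finsupp.sum_finset_sum_index (by intro a; simp)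
    (by intro a b c; split_ifs <;> simp)]
  have h2 : ∀ I ∈ S.powerset.filter (· ≠ ∅),
      (Finsupp.single (I.gcd id) ((-1 : ℤ) ^ I.card * 2 ^ (I.card - 1))).sum
        (fun n a => if x ∣ n then a else 0)
      = if x ∣ I.gcd id then ((-1 : ℤ) ^ I.card * 2 ^ (I.card - 1)) else 0 := by
    intro I _
    rw [Finsupp.sum_single_index]; simp
  rw [Finset.sum_congr rfl h2, ← Finset.sum_filter]
  apply Finset.sum_congr _ (fun _ _ => rfl)
  ext I
  simp only [Finset.mem_filter, Finset.mem_powerset, Finset.dvd_gcd_iff, id,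
    Finset.subset_iff]
  grind

lemma two_beta (S : Finset ℕ) (x : ℕ) :
    2 * beta S x + 1 = (-1) ^ (S.filter (x ∣ ·)).card := by
  rw [beta_eq]
  generalize S.filter (x ∣ ·) = T
  have h := Finset.sum_pow_mul_eq_add_pow (-2 : ℤ) 1 T
  norm_num at h
  rw [← h, ← Finset.sum_filter_add_sum_filter_not T.powerset (· ≠ ∅), Finset.mul_sum]
  congr 1
  · apply Finset.sum_congr rfl
    intro I hI
    have : I.card ≠ 0 := by simpa using (Finset.mem_filter.1 hI).2
    obtain ⟨k, hk⟩ := Nat.exists_eq_succ_of_ne_zero this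
    rw [hk, show (-2 : ℤ) = (-1) * 2 by norm_num, mul_pow]
    simp [pow_succ]; ring
  · have : T.powerset.filter (fun a => ¬ (a ≠ ∅)) = {∅} := by
      ext I; simp; rintro rfl; simp
    rw [this]; simp

lemma card_step (A B : Finset ℕ) (hA : ∀ s ∈ A, 0 < s) (hB : ∀ s ∈ B, 0 < s) (x : ℕ)
    (hxA : x ∈ A) (hxB : x ∉ B) (hmax : ∀ y, x < y → (y ∈ A ↔ y ∈ B)) :
    (A.filter (x ∣ ·)).card = (B.filter (x ∣ ·)).card + 1 := by
  have : A.filter (x ∣ ·) = insert x (B.filter (x ∣ ·)) := by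
    ext y
    simp only [Finset.mem_filter, Finset.mem_insert]
    have h1 : y ∈ A → x ∣ y → x ≤ y := fun h h' => Nat.le_of_dvd (hA y h) h'
    have h2 : y ∈ B → x ∣ y → x ≤ y := fun h h' => Nat.le_of_dvd (hB y h) h'
    have h3 := hmax y
    have h4 : x ∣ x := dvd_rfl
    rcases lt_trichotomy x y with h | h | h
    · grind
    · subst h; simp [hxA]
    · grind
  rw [this, Finset.card_insert_of_notMem (by simp [hxB])]

lemma odd_diff (A B : Finset ℕ) (hA : ∀ s ∈ A, 0 < s) (hB : ∀ s ∈ B, 0 < s) (x : ℕ)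
    (hxA : x ∈ A) (hxB : x ∉ B) (hmax : ∀ y, x < y → (y ∈ A ↔ y ∈ B)) :
    Odd (beta A x - beta B x) := by
  have h1 := two_beta A x
  have h2 := two_beta B x
  rw [card_step A B hA hB x hxA hxB hmax, pow_succ] at h1
  rcases neg_one_pow_eq_or ℤ (B.filter (x ∣ ·)).card with h | h <;> rw [h] at h1 h2 <;>
    rw [Int.odd_iff] <;> omega

/-- If `x*` is the largest element of the symmetric difference `S₀ △ S₁` of two
distinct key sets, then `β_{S₀}(x*) − β_{S₁}(x*)` is odd; in particular
`β_{S₀}(x*) ≠ β_{S₁}(x*)`. -/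
theorem beta_parity_distinguishes (S₀ S₁ : Finset ℕ)
    (h₀ : ∀ s ∈ S₀, 0 < s) (h₁ : ∀ s ∈ S₁, 0 < s) (hne : S₀ ≠ S₁)
    (xstar : ℕ) (hmem : xstar ∈ (S₀ \ S₁) ∪ (S₁ \ S₀))
    (hmax : ∀ y ∈ (S₀ \ S₁) ∪ (S₁ \ S₀), y ≤ xstar) :
    Odd (beta S₀ xstar - beta S₁ xstar) ∧ beta S₀ xstar ≠ beta S₁ xstar := by
  have hm : ∀ y, xstar < y → (y ∈ S₀ ↔ y ∈ S₁) := by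
    intro y hy
    have := hmax y
    simp only [Finset.mem_union, Finset.mem_sdiff] at this
    by_contra hc
    have : y ≤ xstar := this (by tauto)
    omega
  have hodd : Odd (beta S₀ xstar - beta S₁ xstar) := by
    simp only [Finset.mem_union, Finset.mem_sdiff] at hmem
    rcases hmem with h | h
    · exact odd_diff S₀ S₁ h₀ h₁ xstar h.1 h.2 hm
    · have := odd_diff S₁ S₀ h₁ h₀ xstar h.1 h.2 (fun y hy => (hm y hy).symm)
      rw [← neg_sub]
      exact this.neg
  refine ⟨hodd, fun h => ?_⟩
  rw [h, sub_self] at hodd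
  exact absurd hodd (by decide)
end

section
/- (CPA Distinguishability by Dihedral Probes) Let S₀ and S₁ be finite sets of positive integers with S₀ ≠ S₁. Then there exists a positive integer x such that T_{S₀} δ_x ≠ T_{S₁} δ_x; equivalently, the ciphertexts (D_x)·k_{S₀} and (D_x)·k_{S₁} differ for some dihedral probe (D_x). -/
theorem keyOp_diag (S : Finset ℕ) (x : ℕ) :
    keyOp S (Finsupp.single x 1) x = (-1 : ℤ) ^ (S.filter (x ∣ ·)).card := by
  classical
  have key : (∑ n ∈ (alphaF S).support,
      Finsupp.single (Nat.gcd x n) ((1 : ℤ) * alphaF S n)) x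
      = ∑ I ∈ S.powerset.filter (· ≠ ∅),
        if x ∣ I.gcd id then (-1 : ℤ) ^ I.card * 2 ^ (I.card - 1) else 0 := by
    have h1 : (∑ n ∈ (alphaF S).support,
      Finsupp.single (Nat.gcd x n) ((1 : ℤ) * alphaF S n)) x
      = (alphaF S).sum (fun n a => if x ∣ n then a else 0) := by
      rw [Finsupp.finsetSum_apply, Finsupp.sum]
      refine Finset.sum_congr rfl fun n _ => ?_
      rw [Finsupp.single_apply, one_mul]
      simp only [Nat.gcd_eq_left_iff_dvd]
    rw [h1, alphaF, ← Finsupp.sum_finsetSum_index]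
    · refine Finset.sum_congr rfl fun I _ => ?_
      rw [Finsupp.sum_single_index]
      simp
    · intro n; simp
    · intro n a b; split_ifs <;> simp
  have hs : (Finsupp.single x (1 : ℤ)).support = {x} :=
    Finsupp.support_single_ne_zero x one_ne_zero
  have e1 : keyOp S (Finsupp.single x 1) x = 1 + 2 * (∑ n ∈ (alphaF S).support,
      Finsupp.single (Nat.gcd x n) ((1 : ℤ) * alphaF S n)) x := by
    unfold keyOp
    rw [hs, Finset.sum_singleton]
    simp only [Finsupp.add_apply, Finsupp.smul_apply, Finsupp.single_eq_same, nsmul_eq_mul]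
    norm_num
  rw [e1, key]
  have e2 := Finset.sum_pow_mul_eq_add_pow (-2 : ℤ) 1 (S.filter (x ∣ ·))
  simp only [one_pow, mul_one] at e2
  have e3 : (-2 + 1 : ℤ) = -1 := by norm_num
  rw [e3] at e2
  rw [← e2, ← Finset.sum_filter_add_sum_filter_not (S.filter (x ∣ ·)).powerset (· ≠ ∅), Finset.mul_sum]
  have e4 : ((S.filter (x ∣ ·)).powerset.filter (fun I => ¬ (I ≠ ∅))) = {∅} := by
    ext I
    simp only [Finset.mem_filter, Finset.mem_powerset, Finset.mem_singleton, not_not]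
    constructor
    · exact fun h => h.2
    · rintro rfl; simp
  rw [e4, Finset.sum_singleton, Finset.card_empty, pow_zero, add_comm]
  congr 1
  have e5 : (S.filter (x ∣ ·)).powerset.filter (· ≠ ∅)
      = (S.powerset.filter (· ≠ ∅)).filter (fun I => x ∣ I.gcd id) := by
    ext I
    simp only [Finset.mem_filter, Finset.mem_powerset, Finset.dvd_gcd_iff, id,
      Finset.subset_iff]
    grind
  rw [e5, Finset.sum_filter (s := S.powerset.filter (· ≠ ∅)) (p := fun I => x ∣ I.gcd id)]
  refine Finset.sum_congr rfl fun I hI => ?_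
  split_ifs
  · have hc : I.card ≠ 0 := by
      simpa using (Finset.mem_filter.1 hI).2
    obtain ⟨k, hk⟩ := Nat.exists_eq_succ_of_ne_zero hc
    rw [hk, neg_pow 2]
    simp only [Nat.succ_eq_add_one, Nat.add_sub_cancel]
    ring
  · simp

theorem parity_aux (A B : Finset ℕ) (d : ℕ) (hd : d ∈ A) (hd' : d ∉ B)
    (h : ∀ n, d < n → (n ∈ A ↔ n ∈ B)) (hB : ∀ n ∈ B, 0 < n) (hA : ∀ n ∈ A, 0 < n) :
    (A.filter (d ∣ ·)).card = (B.filter (d ∣ ·)).card + 1 := by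
  have : A.filter (d ∣ ·) = insert d (B.filter (d ∣ ·)) := by
    ext n
    simp only [Finset.mem_filter, Finset.mem_insert]
    rcases lt_trichotomy n d with hn | hn | hn
    · have a1 : n ∈ A → ¬ d ∣ n := fun q w => absurd (Nat.le_of_dvd (hA n q) w) (by omega)
      have a2 : n ∈ B → ¬ d ∣ n := fun q w => absurd (Nat.le_of_dvd (hB n q) w) (by omega)
      have : n ≠ d := by omega
      tauto
    · subst hn; simp [hd]
    · have := h n hn
      have : n ≠ d := by omega
      tauto
  rw [this, Finset.card_insert_of_notMem (by simp [hd'])]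

/-- (CPA Distinguishability by Dihedral Probes) For any two distinct key sets
`S₀ ≠ S₁`, some dihedral probe `(D_x)` yields different ciphertexts:
`(D_x)·k_{S₀} ≠ (D_x)·k_{S₁}`. -/
theorem cpa_distinguishability (S₀ S₁ : Finset ℕ)
    (h₀ : ∀ s ∈ S₀, 0 < s) (h₁ : ∀ s ∈ S₁, 0 < s) (hne : S₀ ≠ S₁) :
    ∃ x : ℕ, 0 < x ∧
      keyOp S₀ (Finsupp.single x 1) ≠ keyOp S₁ (Finsupp.single x 1) := by
  classical
  have hD : (symmDiff S₀ S₁).Nonempty := by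
    rw [Finset.nonempty_iff_ne_empty]
    intro h
    exact hne (symmDiff_eq_bot.1 h)
  set d := (symmDiff S₀ S₁).max' hD with hd
  have hm : d ∈ symmDiff S₀ S₁ := Finset.max'_mem _ _
  have hmax : ∀ n, d < n → (n ∈ S₀ ↔ n ∈ S₁) := by
    intro n hn
    by_contra hc
    have : n ∈ symmDiff S₀ S₁ := by
      rw [Finset.mem_symmDiff]; tauto
    have := Finset.le_max' _ n this
    omega
  rw [Finset.mem_symmDiff] at hm
  have hne1 : ∀ k : ℕ, (-1 : ℤ) ^ (k + 1) ≠ (-1) ^ k := by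
    intro k hk
    have : (-1 : ℤ) ^ k ≠ 0 := pow_ne_zero _ (by norm_num)
    rw [pow_succ] at hk
    omega
  refine ⟨d, ?_, fun he => ?_⟩
  · rcases hm with h | h
    · exact h₀ d h.1
    · exact h₁ d h.1
  · have he' := DFunLike.congr_fun he d
    rw [keyOp_diag, keyOp_diag] at he'
    rcases hm with h | h
    · rw [parity_aux S₀ S₁ d h.1 h.2 hmax h₁ h₀] at he'
      exact hne1 _ he'
    · rw [parity_aux S₁ S₀ d h.1 h.2 (fun n hn => (hmax n hn).symm) h₀ h₁] at he'
      exact hne1 _ he'.symm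
end

section
/- (One-query distinguisher) Let S₀ and S₁ be finite sets of positive integers with S₀ ≠ S₁, and let x* be the largest element of the symmetric difference S₀ △ S₁. Then (T_{S₀} δ_{x*})(x*) ≠ (T_{S₁} δ_{x*})(x*); that is, the single chosen-plaintext query (D_{x*}) distinguishes the keys k_{S₀} and k_{S₁} with certainty by reading the coefficient of (D_{x*}) in the ciphertext. -/
theorem alphaF_sum_aux (S : Finset ℕ) (x : ℕ) :
    (alphaF S).sum (fun n a => if x ∣ n then a else 0)
      = ∑ I ∈ (S.filter (x ∣ ·)).powerset.filter (· ≠ ∅),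
          (-1 : ℤ) ^ I.card * 2 ^ (I.card - 1) := by
  unfold alphaF
  rw [← Finsupp.sum_finset_sum_index]
  · have h : ∀ I ∈ S.powerset.filter (· ≠ ∅),
        (Finsupp.single (I.gcd id) ((-1 : ℤ) ^ I.card * 2 ^ (I.card - 1))).sum
          (fun n a => if x ∣ n then a else 0)
        = if x ∣ I.gcd id then (-1 : ℤ) ^ I.card * 2 ^ (I.card - 1) else 0 := by
      intro I _
      rw [Finsupp.sum_single_index]
      simp
    rw [Finset.sum_congr rfl h, ← Finset.sum_filter]
    apply Finset.sum_congr _ (fun _ _ => rfl)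
    ext I
    simp only [Finset.mem_filter, Finset.mem_powerset, Finset.dvd_gcd_iff, id,
      Finset.subset_iff]
    constructor
    · rintro ⟨⟨a, b⟩, c⟩
      exact ⟨fun y hy => ⟨a hy, c y hy⟩, b⟩
    · rintro ⟨a, b⟩
      exact ⟨⟨fun y hy => (a hy).1, b⟩, fun y hy => (a hy).2⟩
  · intro a
    simp
  · intro a b c
    split_ifs <;> simp

theorem keyOp_aux (S : Finset ℕ) (x : ℕ) :
    keyOp S (Finsupp.single x 1) x = (-1) ^ (S.filter (x ∣ ·)).card := by
  have h1 : keyOp S (Finsupp.single x 1) x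
      = 1 + 2 * (alphaF S).sum (fun n a => if x ∣ n then a else 0) := by
    unfold keyOp
    rw [Finsupp.support_single_ne_zero _ one_ne_zero]
    simp [Finsupp.sum, Finsupp.finset_sum_apply, Finsupp.single_apply, Nat.gcd_eq_left_iff_dvd]
  rw [h1, alphaF_sum_aux]
  have h2 := Finset.sum_pow_mul_eq_add_pow (-2 : ℤ) 1 (S.filter (x ∣ ·))
  have h3 : (-2 : ℤ) + 1 = -1 := by norm_num
  rw [h3] at h2
  rw [← h2, ← Finset.sum_filter_add_sum_filter_not (S.filter (x ∣ ·)).powerset (· ≠ ∅), Finset.mul_sum, add_comm]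
  congr 1
  · apply Finset.sum_congr rfl
    intro I hI
    have hc : I.card ≠ 0 := by
      simpa using (Finset.mem_filter.mp hI).2
    obtain ⟨k, hk⟩ := Nat.exists_eq_succ_of_ne_zero hc
    rw [hk]
    have : (-2 : ℤ) = -1 * 2 := by norm_num
    rw [this, mul_pow]
    simp [pow_succ]
    ring
  · have : (S.filter (x ∣ ·)).powerset.filter (fun I => ¬ I ≠ ∅) = {∅} := by
      ext I
      simp only [Finset.mem_filter, Finset.mem_powerset, not_not, Finset.mem_singleton]
      constructor
      · exact fun h => h.2
      · rintro rfl
        simp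
    rw [this]
    simp

theorem card_aux (S T : Finset ℕ) (x : ℕ) (hS : ∀ s ∈ S, 0 < s) (hT : ∀ s ∈ T, 0 < s)
    (hx : x ∈ S) (hx' : x ∉ T) (hmax : ∀ y, ¬ (y ∈ S ↔ y ∈ T) → y ≤ x) :
    (S.filter (x ∣ ·)).card = (T.filter (x ∣ ·)).card + 1 := by
  have : S.filter (x ∣ ·) = insert x (T.filter (x ∣ ·)) := by
    ext y
    simp only [Finset.mem_filter, Finset.mem_insert]
    by_cases hy : y = x
    · subst hy
      simp [hx]
    · by_cases hd : x ∣ y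
      · simp only [hd, hy, and_true, false_or]
        by_contra hn
        have hle := hmax y hn
        have hpos : 0 < y := by
          by_cases h : y ∈ S
          · exact hS y h
          · exact hT y (by tauto)
        exact hy (le_antisymm hle (Nat.le_of_dvd hpos hd))
      · simp [hd, hy]
  rw [this, Finset.card_insert_of_notMem]
  simp [hx']

/-- (One-query distinguisher) If `x*` is the largest element of the symmetric
difference `S₀ △ S₁`, then the single chosen-plaintext query `(D_{x*})`
distinguishes the keys with certainty: the coefficients of `(D_{x*})` in the
two ciphertexts differ. -/
theorem one_query_distinguisher (S₀ S₁ : Finset ℕ)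
    (h₀ : ∀ s ∈ S₀, 0 < s) (h₁ : ∀ s ∈ S₁, 0 < s) (hne : S₀ ≠ S₁)
    (xstar : ℕ) (hmem : xstar ∈ (S₀ \ S₁) ∪ (S₁ \ S₀))
    (hmax : ∀ y ∈ (S₀ \ S₁) ∪ (S₁ \ S₀), y ≤ xstar) :
    keyOp S₀ (Finsupp.single xstar 1) xstar
      ≠ keyOp S₁ (Finsupp.single xstar 1) xstar := by
  rw [keyOp_aux, keyOp_aux]
  have hm : ∀ y, ¬ (y ∈ S₀ ↔ y ∈ S₁) → y ≤ xstar := by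
    intro y hy
    apply hmax
    simp only [Finset.mem_union, Finset.mem_sdiff]
    tauto
  have hp : ∀ k : ℕ, (-1 : ℤ) ^ (k + 1) ≠ (-1) ^ k := by
    intro k
    rcases neg_one_pow_eq_or ℤ k with h | h <;> rw [pow_succ, h] <;> norm_num
  simp only [Finset.mem_union, Finset.mem_sdiff] at hmem
  rcases hmem with ⟨a, b⟩ | ⟨a, b⟩
  · rw [card_aux S₀ S₁ xstar h₀ h₁ a b hm]
    exact hp _
  · rw [card_aux S₁ S₀ xstar h₁ h₀ a b (fun y hy => hm y (fun h => hy h.symm))]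
    exact (hp _).symm
end
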